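/- For every integer n ≥ 1, ∑_{π ∈ D_n} (-1)^{inv(π)} t^{rlm(π)} = (-1)^{n-1}(t + t^2 + ⋯ + t^{n-1}) as an identity of polynomials in the variable t. -/

import Mathlib

open Finset MvPolynomial

/-- Number of inversions of a permutation of `Fin n`
(pairs `p.1 < p.2` with `π p.1 > π p.2`). -/
def inversions {n : ℕ} (π : Equiv.Perm (Fin n)) : ℕ :=
  (Finset.univ.filter fun p : Fin n × Fin n => p.1 < p.2 ∧ π p.2 < π p.1).card

/-- Excedance indices of a permutation. -/
def EXCi {n : ℕ} (π : Equiv.Perm (Fin n)) : Finset (Fin n) :=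
  Finset.univ.filter fun i => i < π i

/-- Excedance values of a permutation. -/
def EXCv {n : ℕ} (π : Equiv.Perm (Fin n)) : Finset (Fin n) :=
  (EXCi π).image π

/-- Right-to-left minima indices of a permutation. -/
def RLMi {n : ℕ} (π : Equiv.Perm (Fin n)) : Finset (Fin n) :=
  Finset.univ.filter fun i => ∀ j, i < j → π i < π j

/-- Right-to-left minima values of a permutation. -/
def RLMv {n : ℕ} (π : Equiv.Perm (Fin n)) : Finset (Fin n) :=
  (RLMi π).image π

/-- The derangements of `Fin n`, i.e. permutations with no fixed point. -/
def derangementsF (n : ℕ) : Finset (Equiv.Perm (Fin n)) :=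
  Finset.univ.filter fun π => ∀ i, π i ≠ i

/-!
Write `t` for `Polynomial.X`, let `D n` be the signed sum over the derangements of `Fin n`, and let
`A n` be the signed sum over the permutations of `Fin (n + 1)` that fix no point except possibly the
last one. Distinguishing whether the last point is fixed gives `A n = D (n + 1) + t * D n`.

On the other hand `A (n + 1) = -A n`. If the largest value stands at the last but one position,
removing it changes the sign, keeps the number of right-to-left minima and leaves an arbitrary
permutation counted by `A n`. The remaining permutations cancel in pairs under exchanging the two
largest values. As `A 0 = t`, it follows that `D (n + 1) = (-1) ^ n * t - t * D n`, which unrolls to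
the geometric sum.
-/

lemma sum_Icc_one_pow_eq_mul_geom_sum {R : Type*} [Semiring R] (x : R) (n : ℕ) :
    ∑ k ∈ Icc 1 n, x ^ k = x * ∑ k ∈ range n, x ^ k := by
  rw [range_eq_Ico, mul_sum, ← Ico_add_one_right_eq_Icc, ← sum_Ico_add' _ 0 n 1]
  simp only [pow_succ']

lemma castSucc_covBy_succ {n : ℕ} (i : Fin n) : i.castSucc ⋖ i.succ :=
  Fin.covBy_iff.mpr (Order.covBy_add_one (i : ℕ))

lemma swap_lt_swap_of_covBy {α : Type*} [LinearOrder α] {a b x y : α} (hab : a ⋖ b) (hxy : x < y)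
    (h : ¬(x = a ∧ y = b)) : Equiv.swap a b x < Equiv.swap a b y := by
  have hlt := hab.lt
  have hge {z : α} (hz : a < z) : b ≤ z := hab.ge_of_gt hz
  have hle {z : α} (hz : z < b) : z ≤ a := hab.le_of_lt hz
  grind

section Transposition

variable {n : ℕ}

lemma mem_RLMi {π : Equiv.Perm (Fin n)} {i : Fin n} : i ∈ RLMi π ↔ ∀ j, i < j → π i < π j :=
  mem_filter_univ i

lemma notMem_RLMi {π : Equiv.Perm (Fin n)} {i : Fin n} :
    i ∉ RLMi π ↔ ∃ j, i < j ∧ π j < π i := by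
  rw [mem_RLMi]
  push Not
  exact exists_congr fun j => and_congr_right fun hij =>
    ⟨fun h => h.lt_of_ne (π.injective.ne hij.ne'), le_of_lt⟩

variable {π : Equiv.Perm (Fin n)} {a b i k : Fin n}

lemma RLMi_swap_mul_subset (hab : a ⋖ b) (hik : i < k) (hi : π i = a ∨ π i = b)
    (hk : π k < a) : RLMi (Equiv.swap a b * π) ⊆ RLMi π := by
  intro j hj
  contrapose! hj
  obtain ⟨l, hjl, hlj⟩ := notMem_RLMi.mp hj
  rw [notMem_RLMi]
  by_cases hba : π l = a ∧ π j = b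
  · obtain ⟨hl, hj⟩ := hba
    have hjk : j < k := by
      rcases hi with hi | hi
      · exact hjl.trans (π.injective (hl.trans hi.symm) ▸ hik)
      · exact π.injective (hj.trans hi.symm) ▸ hik
    refine ⟨k, hjk, ?_⟩
    rwa [Equiv.Perm.mul_apply, Equiv.Perm.mul_apply, hj, Equiv.swap_apply_right,
      Equiv.swap_apply_of_ne_of_ne hk.ne (hk.trans hab.lt).ne]
  · exact ⟨l, hjl, swap_lt_swap_of_covBy hab hlj hba⟩

-- The entry `π k < a` makes the earlier of the entries `a`, `b` a non-minimum, and only the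
-- comparison between these two entries changes.
lemma RLMi_swap_mul (hab : a ⋖ b) (hik : i < k) (hi : π i = a ∨ π i = b) (hk : π k < a) :
    RLMi (Equiv.swap a b * π) = RLMi π := by
  refine (RLMi_swap_mul_subset hab hik hi hk).antisymm ?_
  have hi' : (Equiv.swap a b * π) i = a ∨ (Equiv.swap a b * π) i = b := by
    rcases hi with hi | hi <;> simp [hi]
  have hk' : (Equiv.swap a b * π) k < a := by
    rwa [Equiv.Perm.mul_apply, Equiv.swap_apply_of_ne_of_ne hk.ne (hk.trans hab.lt).ne]
  simpa only [Equiv.swap_mul_self_mul] using RLMi_swap_mul_subset hab hik hi' hk'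

end Transposition

section InsertLast

variable {n : ℕ}

/-- In one-line notation, the permutation of `Fin (n + 1)` obtained by inserting the new largest
value `Fin.last n` at position `p` into the word of `τ`. -/
def insertLast (p : Fin (n + 1)) (τ : Equiv.Perm (Fin n)) : Equiv.Perm (Fin (n + 1)) :=
  (finSuccEquiv' p).trans (τ.optionCongr.trans finSuccEquivLast.symm)

@[simp]
lemma insertLast_apply_self (p : Fin (n + 1)) (τ : Equiv.Perm (Fin n)) :
    insertLast p τ p = Fin.last n := by
  simp [insertLast]

@[simp]
lemma insertLast_apply_succAbove (p : Fin (n + 1)) (τ : Equiv.Perm (Fin n)) (i : Fin n) :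
    insertLast p τ (p.succAbove i) = (τ i).castSucc := by
  simp [insertLast]

@[simp]
lemma insertLast_last_apply_castSucc (τ : Equiv.Perm (Fin n)) (i : Fin n) :
    insertLast (Fin.last n) τ i.castSucc = (τ i).castSucc := by
  rw [← Fin.succAbove_last_apply, insertLast_apply_succAbove]

lemma insertLast_injective (p : Fin (n + 1)) : Function.Injective (insertLast p) := by
  intro σ τ h
  ext i : 1
  simpa using DFunLike.congr_fun h (p.succAbove i)

lemma exists_insertLast_eq {p : Fin (n + 1)} {π : Equiv.Perm (Fin (n + 1))}
    (hp : π p = Fin.last n) : ∃ τ, insertLast p τ = π := by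
  have hne (i : Fin n) : π (p.succAbove i) ≠ Fin.last n := fun h =>
    p.succAbove_ne i (π.injective (h.trans hp.symm))
  let f (i : Fin n) : Fin n := (π (p.succAbove i)).castPred (hne i)
  have hf : Function.Injective f := fun i j hij => by simpa [f] using hij
  refine ⟨Equiv.ofBijective f hf.bijective_of_finite, Equiv.ext fun x => ?_⟩
  induction x using p.succAboveCases with
  | x => rw [insertLast_apply_self, hp]
  | p i => simp [f]

lemma filter_apply_eq_last (p : Fin (n + 1)) :
    ({π | π p = Fin.last n} : Finset (Equiv.Perm (Fin (n + 1)))) =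
      univ.map ⟨insertLast p, insertLast_injective p⟩ := by
  ext π
  simp only [mem_filter_univ, mem_map, mem_univ, true_and, Function.Embedding.coeFn_mk]
  exact ⟨exists_insertLast_eq, fun ⟨τ, hτ⟩ => hτ ▸ insertLast_apply_self p τ⟩

lemma sum_filter_apply_eq_last {M : Type*} [AddCommMonoid M] (p : Fin (n + 1))
    (s : Finset (Equiv.Perm (Fin (n + 1)))) (f : Equiv.Perm (Fin (n + 1)) → M) :
    ∑ π ∈ s with π p = Fin.last n, f π = ∑ τ with insertLast p τ ∈ s, f (insertLast p τ) := by
  have hfilter : ({π ∈ s | π p = Fin.last n} : Finset (Equiv.Perm (Fin (n + 1)))) =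
      {π ∈ ({π | π p = Fin.last n} : Finset (Equiv.Perm (Fin (n + 1)))) | π ∈ s} := by
    ext π
    simp only [mem_filter, mem_univ, true_and, and_comm]
  rw [hfilter, filter_apply_eq_last, filter_map, sum_map]
  rfl

lemma insertLast_mul_cycleIcc (p : Fin (n + 1)) (τ : Equiv.Perm (Fin n)) :
    insertLast p τ * Fin.cycleIcc p (Fin.last n) = insertLast (Fin.last n) τ := by
  ext x : 1
  induction x using Fin.lastCases with
  | last =>
    rw [Equiv.Perm.mul_apply, Fin.cycleIcc_of_last p.le_last, insertLast_apply_self,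
      insertLast_apply_self]
  | cast i =>
    have hi : Fin.cycleIcc p (Fin.last n) i.castSucc = p.succAbove i := by
      simpa only [Function.comp_apply, Fin.succAbove_last] using
        congrFun (Fin.cycleIcc_comp_succAbove p (Fin.last n) p.le_last) i
    rw [Equiv.Perm.mul_apply, hi, insertLast_apply_succAbove, insertLast_last_apply_castSucc]

lemma sign_insertLast_last (τ : Equiv.Perm (Fin n)) :
    Equiv.Perm.sign (insertLast (Fin.last n) τ) = Equiv.Perm.sign τ := by
  have hconj : insertLast (Fin.last n) τ =
      (finSuccEquivLast.trans τ.optionCongr).trans finSuccEquivLast.symm := rfl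
  rw [hconj, Equiv.Perm.sign_trans_trans_symm, Equiv.optionCongr_sign]

lemma sign_insertLast (p : Fin (n + 1)) (τ : Equiv.Perm (Fin n)) :
    Equiv.Perm.sign (insertLast p τ) = (-1) ^ (n - p : ℕ) * Equiv.Perm.sign τ := by
  rw [← sign_insertLast_last τ, ← insertLast_mul_cycleIcc p, Equiv.Perm.sign_mul,
    Fin.sign_cycleIcc_of_le p.le_last, Fin.val_last, mul_left_comm, ← mul_pow]
  simp

lemma RLMi_insertLast_last (τ : Equiv.Perm (Fin n)) :
    RLMi (insertLast (Fin.last n) τ) = insert (Fin.last n) ((RLMi τ).map Fin.castSuccEmb) := by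
  ext x
  induction x using Fin.lastCases with
  | last => simp [mem_RLMi, Fin.not_lt.mpr (Fin.le_last _)]
  | cast i => simp [mem_RLMi, Fin.forall_fin_succ', Fin.castSucc_lt_last, Fin.castSucc_ne_last]

lemma RLMi_insertLast_of_ne_last {p : Fin (n + 1)} (hp : p ≠ Fin.last n)
    (τ : Equiv.Perm (Fin n)) : RLMi (insertLast p τ) = (RLMi τ).map p.succAboveEmb := by
  ext x
  induction x using p.succAboveCases with
  | x =>
    have hmem : p ∉ RLMi (insertLast p τ) := by
      intro h
      have hlt := mem_RLMi.mp h (Fin.last n) (Fin.lt_last_iff_ne_last.mpr hp)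
      rw [insertLast_apply_self] at hlt
      exact hlt.not_ge (Fin.le_last _)
    simpa using hmem
  | p i => simp [mem_RLMi, p.forall_iff_succAbove, Fin.castSucc_lt_last]

end InsertLast

section SignedSum

lemma sign_eq_neg_one_pow_inversions {n : ℕ} (π : Equiv.Perm (Fin n)) :
    Equiv.Perm.sign π = (-1) ^ inversions π := by
  have hinv : inversions π = ∑ i, #{j ∈ Ioi i | π j < π i} := by
    simp only [inversions, card_filter, Fintype.sum_prod_type, ← filter_lt_eq_Ioi, sum_filter,
      ite_and]
  rw [Equiv.Perm.sign_eq_prod_prod_Ioi, hinv, ← prod_pow_eq_pow_sum]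
  refine prod_congr rfl fun i _ => ?_
  rw [← prod_const, prod_filter]
  refine prod_congr rfl fun j hj => ?_
  have hne : π i ≠ π j := π.injective.ne (mem_Ioi.mp hj).ne
  grind

/-- The weight `(-1) ^ inv π * t ^ rlm π` of a permutation, with `t = Polynomial.X`. -/
noncomputable def signedRLMWeight {n : ℕ} (π : Equiv.Perm (Fin n)) : Polynomial ℤ :=
  (-1) ^ inversions π * Polynomial.X ^ #(RLMi π)

lemma signedRLMWeight_eq_sign_mul {n : ℕ} (π : Equiv.Perm (Fin n)) :
    signedRLMWeight π = ((Equiv.Perm.sign π : ℤ) : Polynomial ℤ) * Polynomial.X ^ #(RLMi π) := by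
  simp [signedRLMWeight, sign_eq_neg_one_pow_inversions]

lemma signedRLMWeight_insertLast_last {n : ℕ} (τ : Equiv.Perm (Fin n)) :
    signedRLMWeight (insertLast (Fin.last n) τ) = Polynomial.X * signedRLMWeight τ := by
  have hcard : #(RLMi (insertLast (Fin.last n) τ)) = #(RLMi τ) + 1 := by
    rw [RLMi_insertLast_last, card_insert_of_notMem (by simp [Fin.castSucc_ne_last]), card_map]
  rw [signedRLMWeight_eq_sign_mul, signedRLMWeight_eq_sign_mul, sign_insertLast_last, hcard]
  ring

lemma signedRLMWeight_insertLast_of_ne_last {n : ℕ} {p : Fin (n + 1)} (hp : p ≠ Fin.last n)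
    (τ : Equiv.Perm (Fin n)) :
    signedRLMWeight (insertLast p τ) = (-1) ^ (n - p : ℕ) * signedRLMWeight τ := by
  rw [signedRLMWeight_eq_sign_mul, signedRLMWeight_eq_sign_mul, sign_insertLast,
    RLMi_insertLast_of_ne_last hp, card_map]
  push_cast
  ring

lemma signedRLMWeight_swap_mul {n : ℕ} {π : Equiv.Perm (Fin n)} {a b i k : Fin n} (hab : a ⋖ b)
    (hik : i < k) (hi : π i = a ∨ π i = b) (hk : π k < a) :
    signedRLMWeight (Equiv.swap a b * π) = -signedRLMWeight π := by
  simp [signedRLMWeight_eq_sign_mul, RLMi_swap_mul hab hik hi hk, Equiv.Perm.sign_swap hab.ne]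

/-- The signed enumerator of the derangements of `Fin n` by right-to-left minima. -/
noncomputable def signedDerangementSum (n : ℕ) : Polynomial ℤ :=
  ∑ π ∈ derangementsF n, signedRLMWeight π

/-- The permutations of `Fin (n + 1)` that fix no point except possibly the last one. -/
def almostDerangements (n : ℕ) : Finset (Equiv.Perm (Fin (n + 1))) :=
  {π | ∀ i : Fin n, π i.castSucc ≠ i.castSucc}

lemma mem_almostDerangements {n : ℕ} {π : Equiv.Perm (Fin (n + 1))} :
    π ∈ almostDerangements n ↔ ∀ i : Fin n, π i.castSucc ≠ i.castSucc :=
  mem_filter_univ π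

lemma almostDerangements_filter_last_ne (n : ℕ) :
    {π ∈ almostDerangements n | π (Fin.last n) ≠ Fin.last n} = derangementsF (n + 1) := by
  ext π
  simp only [mem_filter, mem_almostDerangements, derangementsF, mem_univ, true_and,
    Fin.forall_fin_succ']

lemma insertLast_last_mem_almostDerangements_iff {n : ℕ} {τ : Equiv.Perm (Fin n)} :
    insertLast (Fin.last n) τ ∈ almostDerangements n ↔ τ ∈ derangementsF n := by
  simp [mem_almostDerangements, derangementsF]

lemma insertLast_castSucc_last_mem_almostDerangements_iff {n : ℕ}
    {τ : Equiv.Perm (Fin (n + 1))} :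
    insertLast (Fin.last n).castSucc τ ∈ almostDerangements (n + 1) ↔
      τ ∈ almostDerangements n := by
  have hval (i : Fin n) : insertLast (Fin.last n).castSucc τ i.castSucc.castSucc =
      (τ i.castSucc).castSucc := by
    rw [← insertLast_apply_succAbove, Fin.succAbove_castSucc_of_lt _ _ (Fin.castSucc_lt_last i)]
  simp [mem_almostDerangements, Fin.forall_fin_succ' (n := n), hval,
    (Fin.castSucc_ne_last _).symm]

/-- The signed enumerator of the almost derangements of `Fin (n + 1)` by right-to-left minima. -/
noncomputable def signedAlmostDerangementSum (n : ℕ) : Polynomial ℤ :=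
  ∑ π ∈ almostDerangements n, signedRLMWeight π

lemma signedAlmostDerangementSum_eq (n : ℕ) :
    signedAlmostDerangementSum n =
      signedDerangementSum (n + 1) + Polynomial.X * signedDerangementSum n := by
  rw [signedAlmostDerangementSum,
    ← sum_filter_not_add_sum_filter _ (fun π => π (Fin.last n) = Fin.last n),
    almostDerangements_filter_last_ne, sum_filter_apply_eq_last]
  simp only [insertLast_last_mem_almostDerangements_iff, signedRLMWeight_insertLast_last,
    filter_univ_mem, signedDerangementSum, mul_sum]

lemma signedAlmostDerangementSum_zero : signedAlmostDerangementSum 0 = Polynomial.X := by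
  simp [signedAlmostDerangementSum, almostDerangements, signedRLMWeight_eq_sign_mul, RLMi]

lemma sum_almostDerangements_apply_eq_last (n : ℕ) :
    ∑ π ∈ almostDerangements (n + 1) with π (Fin.last n).castSucc = Fin.last (n + 1),
      signedRLMWeight π = -signedAlmostDerangementSum n := by
  simp [sum_filter_apply_eq_last, insertLast_castSucc_last_mem_almostDerangements_iff,
    signedRLMWeight_insertLast_of_ne_last (Fin.castSucc_ne_last _), signedAlmostDerangementSum]

-- Exchanging the two largest values is a sign-reversing involution: the entry at the last but one
-- position is smaller than both, so right-to-left minima are preserved.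
lemma sum_almostDerangements_apply_ne_last (n : ℕ) :
    ∑ π ∈ almostDerangements (n + 1) with π (Fin.last n).castSucc ≠ Fin.last (n + 1),
      signedRLMWeight π = 0 := by
  set a : Fin (n + 2) := (Fin.last n).castSucc
  set b : Fin (n + 2) := Fin.last (n + 1)
  have hab : a ⋖ b := castSucc_covBy_succ (Fin.last n)
  have hlt {x : Fin (n + 2)} (hxa : x ≠ a) (hxb : x ≠ b) : x < a :=
    (hab.le_of_lt (Fin.lt_last_iff_ne_last.mpr hxb)).lt_of_ne hxa
  refine sum_involution (fun π _ => Equiv.swap a b * π) ?_ ?_ ?_ ?_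
  · intro π hπ
    rw [mem_filter, mem_almostDerangements] at hπ
    obtain ⟨hπ, hπb⟩ := hπ
    have hπa : π a < a := hlt (hπ _) hπb
    obtain ⟨i, hia, hi⟩ : ∃ i < a, π i = a ∨ π i = b := by
      obtain ⟨i, hi⟩ := π.surjective a
      obtain ⟨j, hj⟩ := π.surjective b
      grind
    rw [signedRLMWeight_swap_mul hab hia hi hπa, add_neg_cancel]
  · intro π _ _ h
    exact hab.ne (Equiv.swap_eq_one_iff.mp (mul_eq_right.mp h))
  · intro π hπ
    rw [mem_filter, mem_almostDerangements] at hπ ⊢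
    have hfix : (Equiv.swap a b * π) a = π a :=
      Equiv.swap_apply_of_ne_of_ne (hπ.1 (Fin.last n)) hπ.2
    refine ⟨fun i hi => ?_, hfix ▸ hπ.2⟩
    by_cases hia : i.castSucc = a
    · rw [hia, hfix, ← hia] at hi
      exact hπ.1 i hi
    · rw [Equiv.Perm.mul_apply, Equiv.swap_apply_eq_iff,
        Equiv.swap_apply_of_ne_of_ne hia (Fin.castSucc_ne_last i)] at hi
      exact hπ.1 i hi
  · intro π _
    exact Equiv.swap_mul_self_mul a b π

lemma signedAlmostDerangementSum_succ (n : ℕ) :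
    signedAlmostDerangementSum (n + 1) = -signedAlmostDerangementSum n := by
  rw [signedAlmostDerangementSum, ← sum_filter_add_sum_filter_not _
    (fun π => π (Fin.last n).castSucc = Fin.last (n + 1)),
    sum_almostDerangements_apply_eq_last, sum_almostDerangements_apply_ne_last, add_zero]

lemma signedAlmostDerangementSum_eq_neg_one_pow_mul (n : ℕ) :
    signedAlmostDerangementSum n = (-1) ^ n * Polynomial.X := by
  induction n with
  | zero => rw [signedAlmostDerangementSum_zero, pow_zero, one_mul]
  | succ n ih => rw [signedAlmostDerangementSum_succ, ih, pow_succ]; ring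

lemma signedDerangementSum_zero : signedDerangementSum 0 = 1 := by
  simp [signedDerangementSum, signedRLMWeight_eq_sign_mul, derangementsF, RLMi]

lemma signedDerangementSum_succ (n : ℕ) :
    signedDerangementSum (n + 1) =
      (-1) ^ n * Polynomial.X - Polynomial.X * signedDerangementSum n := by
  rw [← signedAlmostDerangementSum_eq_neg_one_pow_mul, signedAlmostDerangementSum_eq,
    add_sub_cancel_right]

lemma signedDerangementSum_succ_eq_geom_sum (n : ℕ) :
    signedDerangementSum (n + 1) =
      (-1) ^ n * (Polynomial.X * ∑ k ∈ range n, Polynomial.X ^ k) := by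
  induction n with
  | zero => simp [signedDerangementSum_succ, signedDerangementSum_zero]
  | succ n ih =>
    rw [signedDerangementSum_succ, ih, geom_sum_succ]
    ring

end SignedSum

theorem stmt3 (n : ℕ) (hn : 1 ≤ n) :
    ∑ π ∈ derangementsF n,
      ((-1 : Polynomial ℤ) ^ inversions π) * Polynomial.X ^ (RLMi π).card
    = (-1) ^ (n - 1) * ∑ k ∈ Finset.Icc 1 (n - 1), (Polynomial.X : Polynomial ℤ) ^ k := by
  rw [sum_Icc_one_pow_eq_mul_geom_sum, ← signedDerangementSum_succ_eq_geom_sum,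
    Nat.sub_add_cancel hn]
  rfl
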